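/- For every set X of n points in d-dimensional Euclidean space ℝ^d with minimum pairwise distance 1, every ε ∈ (0, 1/8), and every t with 2 ≤ t ≤ √(2d/ln d), there exists an O(t)-spanner for X with lightness O_ε(t·2^{O(d/t²)}·log² n) and with O_ε(n·2^{O(d/t²)}·log n·log t) edges, where O_ε hides factors polynomial in 1/ε. -/

import Mathlib

open MeasureTheory

noncomputable section

/-- The distance function on unordered pairs of points. -/
def symDist {X : Type*} [MetricSpace X] : Sym2 X → ℝ :=
  Sym2.lift ⟨fun a b => dist a b, fun a b => dist_comm a b⟩

/-- The weight of a walk: the sum of the metric distances along its edges. -/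
def walkWeight {X : Type*} [MetricSpace X] {G : SimpleGraph X} {u v : X}
    (p : G.Walk u v) : ℝ :=
  (p.edges.map symDist).sum

/-- Shortest-path distance in a graph whose edges are weighted by the metric. -/
def spannerDist {X : Type*} [MetricSpace X] (G : SimpleGraph X) (u v : X) : ℝ :=
  sInf {c | ∃ p : G.Walk u v, walkWeight p = c}

/-- `G` is a `t`-spanner of the metric space `X`. -/
def IsSpanner {X : Type*} [MetricSpace X] (G : SimpleGraph X) (t : ℝ) : Prop :=
  ∀ u v : X, dist u v ≤ spannerDist G u v ∧ spannerDist G u v ≤ t * dist u v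

/-- Total weight of a graph over a finite metric space. -/
def graphWeight {X : Type*} [MetricSpace X] [Fintype X] (G : SimpleGraph X) : ℝ :=
  ∑ e ∈ G.edgeSet.toFinite.toFinset, symDist e

/-- Number of edges of a graph. -/
def edgeCount {X : Type*} (G : SimpleGraph X) : ℕ :=
  Nat.card G.edgeSet

/-- Weight of a minimum spanning tree of a finite metric space: the minimum total
weight of a connected graph on `X`. -/
def mstWeight (X : Type*) [MetricSpace X] [Fintype X] : ℝ :=
  sInf {c | ∃ G : SimpleGraph X, G.Connected ∧ graphWeight G = c}

/-- `D` is a `(t, Δ, δ)`-decomposition of the metric space `X`. -/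
def IsDecomposition {X : Type*} [MetricSpace X] (t Δ δ : ℝ) (D : PMF (Setoid X)) : Prop :=
  (∀ P ∈ D.support, ∀ x y : X, P.r x y → dist x y ≤ t * Δ) ∧
  (∀ x y : X, dist x y ≤ Δ → ENNReal.ofReal δ ≤ D.toOuterMeasure {P | P.r x y})

/-- A metric space `X` is `(t, δ)`-decomposable. -/
def IsDecomposable (X : Type*) [MetricSpace X] (t δ : ℝ) : Prop :=
  ∀ Δ : ℝ, 0 < Δ → ∃ D : PMF (Setoid X), IsDecomposition t Δ δ D

/-- `X` has doubling constant `lam`. -/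
def HasDoublingConstant (X : Type*) [MetricSpace X] (lam : ℕ) : Prop :=
  ∀ (x : X) (r : ℝ), 0 < r → ∃ F : Finset X, F.card ≤ lam ∧
    Metric.closedBall x (2 * r) ⊆ ⋃ y ∈ F, Metric.closedBall y r

/-- Weight of a walk in a weighted graph. -/
def wWalkWeight {V : Type*} {G : SimpleGraph V} (w : Sym2 V → ℝ) {u v : V}
    (p : G.Walk u v) : ℝ :=
  (p.edges.map w).sum

/-- Shortest-path distance in a weighted graph. -/
def wDist {V : Type*} (G : SimpleGraph V) (w : Sym2 V → ℝ) (u v : V) : ℝ :=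
  sInf {c | ∃ p : G.Walk u v, wWalkWeight w p = c}

/-- Total edge weight of a weighted graph. -/
def wGraphWeight {V : Type*} [Fintype V] (G : SimpleGraph V) (w : Sym2 V → ℝ) : ℝ :=
  ∑ e ∈ G.edgeSet.toFinite.toFinset, w e

/-- Weight of a minimum spanning tree of a weighted graph `G`: the least total weight
of a connected spanning subgraph of `G`. -/
def wMstWeight {V : Type*} [Fintype V] (G : SimpleGraph V) (w : Sym2 V → ℝ) : ℝ :=
  sInf {c | ∃ T : SimpleGraph V, T ≤ G ∧ T.Connected ∧ wGraphWeight T w = c}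

/-- The setoid of elements lying on the same cycle of a permutation. -/
def sameCycleSetoid {α : Type*} (σ : Equiv.Perm α) : Setoid α :=
  ⟨σ.SameCycle, ⟨fun x => Equiv.Perm.SameCycle.refl σ x,
    fun h => h.symm, fun h₁ h₂ => h₁.trans h₂⟩⟩

/-- The number of cycles (orbits) of a permutation. -/
def numCycles {α : Type*} (σ : Equiv.Perm α) : ℕ :=
  Nat.card (Quotient (sameCycleSetoid σ))

/-- The dart-reversal permutation of a graph. -/
def dartReversal {V : Type*} (G : SimpleGraph V) : Equiv.Perm G.Dart :=
  Function.Involutive.toPerm SimpleGraph.Dart.symm SimpleGraph.Dart.symm_involutive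

/-- `σ` is a rotation system of `G`: it permutes darts, preserves tails, and is a single
cycle on the darts emanating from each fixed vertex. -/
def IsRotationSystem {V : Type*} (G : SimpleGraph V) (σ : Equiv.Perm G.Dart) : Prop :=
  (∀ d : G.Dart, (σ d).toProd.1 = d.toProd.1) ∧
  (∀ d e : G.Dart, d.toProd.1 = e.toProd.1 → σ.SameCycle d e)

/-- `G` has (orientable) genus at most `g`: some rotation system, whose number of faces
is the number of cycles of the face permutation `σ * dartReversal G`, satisfies Euler's
formula `V - E + F ≥ 2 - 2g`. -/
def GenusLE {V : Type*} [Fintype V] (G : SimpleGraph V) (g : ℕ) : Prop :=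
  ∃ σ : Equiv.Perm G.Dart, IsRotationSystem G σ ∧
    (2 : ℤ) - 2 * (g : ℤ) ≤
      (Fintype.card V : ℤ) - (Nat.card G.edgeSet : ℤ) + (numCycles (σ * dartReversal G) : ℤ)

/-- `D` is a `(t, Δ, δ)`-strong-decomposition of the weighted graph `(G, w)`: clusters
have strong diameter at most `t·Δ`, and pairs at distance at most `Δ` are clustered
together with probability at least `δ`. -/
def IsStrongDecomposition {V : Type*} (G : SimpleGraph V) (w : Sym2 V → ℝ)
    (t Δ δ : ℝ) (D : PMF (Setoid V)) : Prop :=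
  (∀ P ∈ D.support, ∀ u v : V, P.r u v →
      ∃ p : G.Walk u v, (∀ z ∈ p.support, P.r u z) ∧ wWalkWeight w p ≤ t * Δ) ∧
  (∀ u v : V, wDist G w u v ≤ Δ → ENNReal.ofReal δ ≤ D.toOuterMeasure {P | P.r u v})

/-- A weighted graph is `(t, δ)`-strongly-decomposable. -/
def IsStronglyDecomposable {V : Type*} (G : SimpleGraph V) (w : Sym2 V → ℝ)
    (t δ : ℝ) : Prop :=
  ∀ Δ : ℝ, 0 < Δ → ∃ D : PMF (Setoid V), IsStrongDecomposition G w t Δ δ D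

/-- `D` is an `(r, cr, p₁, p₂)`-sensitive LSH family for `X`. -/
def IsLSHFamily {X : Type*} {U : Type*} [MetricSpace X] (D : PMF (X → U))
    (r cr p₁ p₂ : ℝ) : Prop :=
  (∀ x y : X, dist x y ≤ r → ENNReal.ofReal p₁ ≤ D.toOuterMeasure {h | h x = h y}) ∧
  (∀ x y : X, cr < dist x y → D.toOuterMeasure {h | h x = h y} ≤ ENNReal.ofReal p₂)

end

/-!
Choose a center at random in a large region of `ℝ^d` and let the points within `t * Δ` of it
form a cluster. If `p` is the probability that a given point is clustered, then two points at
distance at most `Δ` are clustered together with probability at least `2 ^ (-O(d / t ^ 2)) * p`,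
because the balls of radius `t * Δ` around them overlap in that fraction of their volume. Suitably
scaled, the probabilities of the clusters are a fractional cover of all pairs at distance at
most `Δ`. Greedy rounding loses a factor `log n` and produces actual clusters that cover all
these pairs.

This is applied at the scales `Δ = 2 ^ i` of a nested sequence of nets, where each cluster is
replaced by a star on its net points. Since a cluster contains at most one point of the net
`O(log t)` levels up, which can be taken as hub, the edges of the stars can be charged to points
that leave the hierarchy within `O(log t)` levels, and each point leaves only once. For the
lightness, a net of scale `Δ` with `m ≥ 2` points forces a spanning tree of weight at least
`m * Δ / 2`, as the tree has to leave `m` disjoint balls of radius `Δ / 2`; only `O(log n)`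
scales matter.
-/

open Finset

/-! ### Walks and spanners -/

section Walks

theorem sub_le_wWalkWeight {X : Type*} {G : SimpleGraph X} {u v : X} {f : X → ℝ}
    {w : Sym2 X → ℝ} (hf : ∀ x y, |f x - f y| ≤ w s(x, y))
    (p : G.Walk u v) : f u - f v ≤ wWalkWeight w p := by
  induction p with
  | nil => simp [wWalkWeight]
  | @cons x y z _ p ih =>
    calc f x - f z = (f x - f y) + (f y - f z) := by ring
      _ ≤ w s(x, y) + wWalkWeight w p := add_le_add ((le_abs_self _).trans (hf x y)) ih
      _ = _ := by simp [wWalkWeight]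

variable {X : Type*} [MetricSpace X] {G H : SimpleGraph X} {u v x : X} {a b c : ℝ}

theorem symDist_nonneg (e : Sym2 X) : 0 ≤ symDist e := by
  induction e with
  | _ x y => exact dist_nonneg

theorem dist_le_walkWeight (p : G.Walk u v) : dist u v ≤ walkWeight p := by
  simpa [walkWeight, wWalkWeight] using
    sub_le_wWalkWeight (f := (dist · v)) (w := symDist) (fun x y => abs_dist_sub_le x y v) p

/-- `ReachableWithin G c u v` says that the shortest-path distance of `u` and `v` in `G` is at
most `c`. It asks for a walk of weight at most `c`, since `spannerDist` has the junk value `0` when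
there is no walk at all. -/
def ReachableWithin (G : SimpleGraph X) (c : ℝ) (u v : X) : Prop :=
  ∃ p : G.Walk u v, walkWeight p ≤ c

namespace ReachableWithin

theorem refl (G : SimpleGraph X) (hc : 0 ≤ c) (u : X) : ReachableWithin G c u u :=
  ⟨.nil, by simpa [walkWeight] using hc⟩

theorem of_adj (h : G.Adj u v) : ReachableWithin G (dist u v) u v :=
  ⟨h.toWalk, by simp [walkWeight, symDist]⟩

theorem symm : ReachableWithin G c u v → ReachableWithin G c v u := fun ⟨p, hp⟩ =>
  ⟨p.reverse, by simpa [walkWeight] using hp⟩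

theorem trans : ReachableWithin G a u v → ReachableWithin G b v x →
    ReachableWithin G (a + b) u x := fun ⟨p, hp⟩ ⟨q, hq⟩ =>
  ⟨p.append q, by simpa [walkWeight] using add_le_add hp hq⟩

theorem mono (hGH : G ≤ H) (hab : a ≤ b) : ReachableWithin G a u v → ReachableWithin H b u v :=
  fun ⟨p, hp⟩ => ⟨p.mapLe hGH, by simpa [walkWeight] using hp.trans hab⟩

end ReachableWithin

theorem isSpanner_of_reachableWithin (h : ∀ u v, ReachableWithin G (c * dist u v) u v) :
    IsSpanner G c := fun u v => by
  obtain ⟨p, hp⟩ := h u v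
  refine ⟨le_csInf ⟨_, p, rfl⟩ ?_, le_trans (csInf_le ⟨0, ?_⟩ ⟨p, rfl⟩) hp⟩
  · rintro _ ⟨q, rfl⟩
    exact dist_le_walkWeight q
  · rintro _ ⟨q, rfl⟩
    exact dist_nonneg.trans (dist_le_walkWeight q)

theorem IsSpanner.mono (hab : a ≤ b) (h : IsSpanner G a) : IsSpanner G b := fun u v =>
  ⟨(h u v).1, (h u v).2.trans (mul_le_mul_of_nonneg_right hab dist_nonneg)⟩

end Walks

/-! ### Edge count and weight -/

section EdgeCount

variable {X : Type*}

theorem edgeCount_bot : edgeCount (⊥ : SimpleGraph X) = 0 := by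
  simp [edgeCount]

theorem edgeCount_sup_le (G H : SimpleGraph X) : edgeCount (G ⊔ H) ≤ edgeCount G + edgeCount H := by
  simpa [edgeCount, Nat.card_coe_set_eq] using Set.ncard_union_le G.edgeSet H.edgeSet

theorem edgeCount_finsetSup_le {ι : Type*} (I : Finset ι) (G : ι → SimpleGraph X) :
    edgeCount (I.sup G) ≤ ∑ i ∈ I, edgeCount (G i) := by
  classical
  induction I using Finset.induction_on with
  | empty => simp [edgeCount_bot]
  | insert i I hi ih =>
    rw [sup_insert, sum_insert hi]
    exact (edgeCount_sup_le _ _).trans (by gcongr)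

variable [MetricSpace X] [Fintype X]

theorem graphWeight_nonneg (G : SimpleGraph X) : 0 ≤ graphWeight G :=
  sum_nonneg fun e _ => symDist_nonneg e

theorem graphWeight_bot : graphWeight (⊥ : SimpleGraph X) = 0 := by
  simp [graphWeight]

theorem graphWeight_sup_le (G H : SimpleGraph X) :
    graphWeight (G ⊔ H) ≤ graphWeight G + graphWeight H := by
  classical
  have hunion : (G ⊔ H).edgeSet.toFinite.toFinset =
      G.edgeSet.toFinite.toFinset ∪ H.edgeSet.toFinite.toFinset := by
    ext e
    simp
  rw [graphWeight, graphWeight, graphWeight, hunion, ← sum_union_inter]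
  exact le_add_of_nonneg_right (sum_nonneg fun e _ => symDist_nonneg e)

theorem graphWeight_finsetSup_le {ι : Type*} (I : Finset ι) (G : ι → SimpleGraph X) :
    graphWeight (I.sup G) ≤ ∑ i ∈ I, graphWeight (G i) := by
  classical
  induction I using Finset.induction_on with
  | empty => simp [graphWeight_bot]
  | insert i I hi ih =>
    rw [sup_insert, sum_insert hi]
    exact (graphWeight_sup_le _ _).trans (by gcongr)

theorem graphWeight_le_edgeCount_mul {G : SimpleGraph X} {R : ℝ}
    (hG : ∀ x y, G.Adj x y → dist x y ≤ R) : graphWeight G ≤ edgeCount G * R := by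
  have hedge : ∀ e ∈ G.edgeSet.toFinite.toFinset, symDist e ≤ R := by
    rintro ⟨x, y⟩ he
    exact hG x y (by simpa using he)
  calc graphWeight G ≤ #G.edgeSet.toFinite.toFinset • R := sum_le_card_nsmul _ _ _ hedge
    _ = edgeCount G * R := by
      rw [nsmul_eq_mul, edgeCount, Nat.card_coe_set_eq, Set.ncard_eq_toFinset_card]

end EdgeCount

/-! ### Lower bounds for the minimum spanning tree -/

section SpanningTree

variable {X : Type*} [Fintype X]

theorem sub_le_wGraphWeight {G : SimpleGraph X} (hG : G.Connected) {f : X → ℝ} {w : Sym2 X → ℝ}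
    (hf : ∀ x y, |f x - f y| ≤ w s(x, y)) (u v : X) : f u - f v ≤ wGraphWeight G w := by
  classical
  obtain ⟨p, hp⟩ := hG.exists_isPath u v
  have hw (e : Sym2 X) : 0 ≤ w e := by
    induction e with
    | _ x y => exact (abs_nonneg _).trans (hf x y)
  refine (sub_le_wWalkWeight hf p).trans ?_
  rw [wWalkWeight, ← List.sum_toFinset _ hp.isTrail.edges_nodup]
  refine sum_le_sum_of_subset_of_nonneg (fun e he => ?_) fun e _ _ => hw e
  simpa using p.edges_subset_edgeSet (List.mem_toFinset.1 he)

variable [MetricSpace X]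

theorem mstWeight_nonneg : 0 ≤ mstWeight X :=
  Real.sInf_nonneg <| by
    rintro _ ⟨G, -, rfl⟩
    exact graphWeight_nonneg G

theorem le_mstWeight [Nonempty X] {c : ℝ}
    (h : ∀ G : SimpleGraph X, G.Connected → c ≤ graphWeight G) : c ≤ mstWeight X := by
  refine le_csInf ⟨_, ⊤, SimpleGraph.connected_top, rfl⟩ ?_
  rintro _ ⟨G, hG, rfl⟩
  exact h G hG

theorem dist_le_mstWeight (x y : X) : dist x y ≤ mstWeight X := by
  have : Nonempty X := ⟨x⟩
  refine le_mstWeight fun G hG => ?_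
  simpa [graphWeight, wGraphWeight] using
    sub_le_wGraphWeight (w := symDist) hG (f := (dist · y)) (fun a b => abs_dist_sub_le a b y) x y

section Hat

variable {X : Type*} [MetricSpace X] {r : ℝ} {x y u v : X} {N : Finset X}

/-- The hat function of height and radius `r / 2` around `x`. The hat functions of the points of an
`r`-separated set have disjoint supports, so a connected graph has to pay for the rise of each of
them separately. -/
noncomputable def hat (r : ℝ) (x u : X) : ℝ :=
  max 0 (r / 2 - dist x u)

theorem hat_nonneg (r : ℝ) (x u : X) : 0 ≤ hat r x u :=
  le_max_left _ _

theorem hat_pos_iff : 0 < hat r x u ↔ dist x u < r / 2 := by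
  simp [hat]

theorem hat_eq_of_pos (h : 0 < hat r x u) : hat r x u = r / 2 - dist x u :=
  max_eq_right (sub_nonneg.2 (hat_pos_iff.1 h).le)

theorem hat_self (hr : 0 ≤ r) (x : X) : hat r x x = r / 2 := by
  rw [hat, dist_self, sub_zero, max_eq_right (by positivity)]

theorem hat_eq_zero (h : r ≤ dist x y) (hr : 0 ≤ r) : hat r x y = 0 :=
  max_eq_left (by linarith)

theorem abs_hat_sub_hat_le (r : ℝ) (x u v : X) : |hat r x u - hat r x v| ≤ dist u v := by
  have hmax : |hat r x u - hat r x v| ≤ |(r / 2 - dist x u) - (r / 2 - dist x v)| := by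
    simpa only [hat, max_comm] using abs_max_sub_max_le_abs (r / 2 - dist x u) (r / 2 - dist x v) 0
  calc |hat r x u - hat r x v| ≤ |dist v x - dist u x| := by
        simpa only [sub_sub_sub_cancel_left, dist_comm x] using hmax
    _ ≤ dist u v := by simpa only [dist_comm v u] using abs_dist_sub_le v u x

theorem hat_eq_zero_of_pos (hxy : r ≤ dist x y) (hx : 0 < hat r x u) : hat r y u = 0 := by
  by_contra hne
  have hy : dist y u < r / 2 := hat_pos_iff.1 ((hat_nonneg r y u).lt_of_ne' hne)
  linarith [hat_pos_iff.1 hx, dist_triangle_right x y u]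

theorem hat_add_hat_le (hxy : r ≤ dist x y) (hx : 0 < hat r x u) (hy : 0 < hat r y v) :
    hat r x u + hat r y v ≤ dist u v := by
  rw [hat_eq_of_pos hx, hat_eq_of_pos hy]
  linarith [dist_triangle4 x u v y, dist_comm y v]

theorem sum_abs_hat_sub_hat_le (hN : (N : Set X).Pairwise fun x y => r ≤ dist x y) (u v : X) :
    ∑ x ∈ N, |hat r x u - hat r x v| ≤ dist u v := by
  by_cases hsplit : ∃ x ∈ N, ∃ y ∈ N, x ≠ y ∧ 0 < hat r x u ∧ 0 < hat r y v
  · obtain ⟨x, hx, y, hy, hxy, hxu, hyv⟩ := hsplit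
    have hu (z) (hz : z ∈ N) (hzx : z ≠ x) : hat r z u = 0 :=
      hat_eq_zero_of_pos (hN hx hz hzx.symm) hxu
    have hv (z) (hz : z ∈ N) (hzy : z ≠ y) : hat r z v = 0 :=
      hat_eq_zero_of_pos (hN hy hz hzy.symm) hyv
    rw [sum_eq_add_of_mem x y hx hy hxy fun z hz hzxy => by
      rw [hu z hz hzxy.1, hv z hz hzxy.2, sub_zero, abs_zero]]
    rw [hv x hx hxy, hu y hy hxy.symm, sub_zero, zero_sub, abs_neg, abs_of_pos hxu, abs_of_pos hyv]
    exact hat_add_hat_le (hN hx hy hxy) hxu hyv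
  push Not at hsplit
  by_cases hzero : ∀ x ∈ N, |hat r x u - hat r x v| = 0
  · exact (sum_eq_zero hzero).trans_le dist_nonneg
  push Not at hzero
  obtain ⟨x, hx, hne⟩ := hzero
  refine (sum_eq_single_of_mem x hx fun y hy hyx => ?_).trans_le (abs_hat_sub_hat_le r x u v)
  have hvanish : hat r y u = 0 ∧ hat r y v = 0 := by
    rcases (hat_nonneg r x u).lt_or_eq with hxu | hxu
    · exact ⟨hat_eq_zero_of_pos (hN hx hy hyx.symm) hxu,
        (hsplit x hx y hy hyx.symm hxu).antisymm (hat_nonneg r y v)⟩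
    · have hxv : 0 < hat r x v := (hat_nonneg r x v).lt_of_ne' fun h => hne (by simp [h, ← hxu])
      have hyu : ¬ 0 < hat r y u := fun h => (hsplit y hy x hx hyx h).not_gt hxv
      exact ⟨(not_lt.1 hyu).antisymm (hat_nonneg r y u),
        hat_eq_zero_of_pos (hN hx hy hyx.symm) hxv⟩
  rw [hvanish.1, hvanish.2, sub_zero, abs_zero]

end Hat

/-- The absolute difference of a potential `f` along an unordered pair of points. -/
def potentialDiff {X : Type*} (f : X → ℝ) : Sym2 X → ℝ :=
  Sym2.lift ⟨fun x y => |f x - f y|, fun x y => abs_sub_comm (f x) (f y)⟩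

theorem mul_card_le_two_mul_mstWeight {r : ℝ} {N : Finset X} (hr : 0 ≤ r)
    (hN : (N : Set X).Pairwise fun x y => r ≤ dist x y) (hcard : 1 < #N) :
    r * #N ≤ 2 * mstWeight X := by
  have : Nonempty X := let ⟨x, _⟩ := card_pos.1 (zero_lt_one.trans hcard); ⟨x⟩
  suffices h : #N * (r / 2) ≤ mstWeight X by linarith
  refine le_mstWeight fun G hG => ?_
  have hrise : ∀ x ∈ N, r / 2 ≤ wGraphWeight G (potentialDiff (hat r x)) := fun x hx => by
    obtain ⟨y, hy, hyx⟩ := exists_mem_ne hcard x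
    simpa only [hat_self hr, hat_eq_zero (hN hx hy hyx.symm) hr, sub_zero] using
      sub_le_wGraphWeight hG (f := hat r x) (fun _ _ => le_rfl) x y
  calc #N * (r / 2) ≤ ∑ x ∈ N, wGraphWeight G (potentialDiff (hat r x)) := by
        simpa only [nsmul_eq_mul] using card_nsmul_le_sum _ _ _ hrise
    _ = ∑ e ∈ G.edgeSet.toFinite.toFinset, ∑ x ∈ N, potentialDiff (hat r x) e := sum_comm
    _ ≤ graphWeight G := sum_le_sum fun e _ => by
        induction e with
        | _ u v => exact sum_abs_hat_sub_hat_le hN u v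

end SpanningTree

/-! ### Hierarchies of nets -/

section Nets

variable {X : Type*} [MetricSpace X] {ρ : ℝ}

theorem exists_subset_separated_cover (hρ : 0 ≤ ρ) (A : Finset X) :
    ∃ B ⊆ A, (B : Set X).Pairwise (fun x y => ρ < dist x y) ∧ ∀ x ∈ A, ∃ y ∈ B, dist x y ≤ ρ := by
  classical
  let S : Finset (Finset X) := {B ∈ A.powerset | (B : Set X).Pairwise fun x y => ρ < dist x y}
  obtain ⟨B, hB⟩ : ∃ B, Maximal (· ∈ S) B := S.exists_maximal ⟨∅, by simp [S]⟩
  obtain ⟨hBA, hsep⟩ : B ⊆ A ∧ (B : Set X).Pairwise fun x y => ρ < dist x y := by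
    simpa [S] using hB.prop
  refine ⟨B, hBA, hsep, fun x hx => ?_⟩
  by_contra! hfar
  have hins : ((insert x B : Finset X) : Set X).Pairwise fun x y => ρ < dist x y := by
    rw [coe_insert, Set.pairwise_insert]
    exact ⟨hsep, fun y hy _ => ⟨hfar y hy, dist_comm x y ▸ hfar y hy⟩⟩
  have hxB : x ∈ B := hB.le_of_ge
    (mem_filter.2 ⟨mem_powerset.2 (insert_subset hx hBA), hins⟩) (subset_insert x B)
    (mem_insert_self x B)
  exact hρ.not_gt (by simpa using hfar x hxB)

theorem exists_pos_lt_dist (X : Type*) [MetricSpace X] [Finite X] :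
    ∃ ρ > 0, ∀ x y : X, x ≠ y → ρ < dist x y := by
  cases subsingleton_or_nontrivial X with
  | inl _ => exact ⟨1, one_pos, fun x y hxy => absurd (Subsingleton.elim x y) hxy⟩
  | inr _ =>
    have hpos : 0 < (Set.univ : Set X).infsep :=
      (Set.infsep_pos_iff_nontrivial_of_finite).2 Set.nontrivial_univ
    refine ⟨_, half_pos hpos, fun x y hxy => (half_lt_self hpos).trans_le ?_⟩
    exact Set.infsep_le_dist_of_mem (Set.mem_univ x) (Set.mem_univ y) hxy

variable [Fintype X]

/-- A nested sequence of nets of `X` with doubling scales `ρ * 2 ^ i`. -/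
structure IsNetHierarchy (ρ : ℝ) (N : ℕ → Finset X) : Prop where
  zero : N 0 = univ
  antitone : Antitone N
  separated : ∀ i, (N i : Set X).Pairwise fun x y => ρ * 2 ^ i < dist x y
  cover : ∀ i, ∀ x ∈ N i, ∃ y ∈ N (i + 1), dist x y ≤ ρ * 2 ^ (i + 1)

theorem exists_isNetHierarchy (hρ : 0 ≤ ρ) (hX : ∀ x y : X, x ≠ y → ρ < dist x y) :
    ∃ N : ℕ → Finset X, IsNetHierarchy ρ N := by
  choose net hsub hsep hcover using fun (i : ℕ) (A : Finset X) =>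
    exists_subset_separated_cover (ρ := ρ * 2 ^ i) (by positivity) A
  let N : ℕ → Finset X := fun i => Nat.rec univ (fun j A => net (j + 1) A) i
  refine ⟨N, rfl, antitone_nat_of_succ_le fun i => hsub _ _, ?_, fun i => hcover _ _⟩
  rintro (_ | i)
  · exact fun x _ y _ hxy => by simpa using hX x y hxy
  · exact hsep _ _

end Nets

theorem sum_card_sdiff_le {X : Type*} [Fintype X] [DecidableEq X] {N : ℕ → Finset X}
    (hN : Antitone N) (k l : ℕ) :
    ∑ i ∈ range l, #(N i \ N (i + k)) ≤ k * Fintype.card X := by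
  refine le_of_add_le_add_right (a := ∑ i ∈ range l, #(N (k + i))) ?_
  calc ∑ i ∈ range l, #(N i \ N (i + k)) + ∑ i ∈ range l, #(N (k + i))
      = ∑ i ∈ range l, #(N i) := by
        rw [← sum_add_distrib]
        refine sum_congr rfl fun i _ => ?_
        rw [add_comm k i, card_sdiff_add_card_eq_card (hN (i.le_add_right k))]
    _ ≤ ∑ i ∈ range (k + l), #(N i) :=
        sum_le_sum_of_subset (range_mono (l.le_add_left k))
    _ = ∑ i ∈ range k, #(N i) + ∑ i ∈ range l, #(N (k + i)) := sum_range_add _ k l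
    _ ≤ k * Fintype.card X + ∑ i ∈ range l, #(N (k + i)) := by
        gcongr
        simpa using sum_le_card_nsmul (range k) _ _ fun i _ => card_le_univ (N i)

namespace IsNetHierarchy

variable {X : Type*} [MetricSpace X] [Fintype X] {ρ : ℝ} {N : ℕ → Finset X}

theorem mul_card_le (hN : IsNetHierarchy ρ N) (hρ : 0 ≤ ρ) {i : ℕ} (hi : ρ * 2 ^ i ≤ mstWeight X) :
    ρ * 2 ^ i * #(N i) ≤ 2 * mstWeight X := by
  rcases lt_or_ge 1 #(N i) with hcard | hcard
  · exact mul_card_le_two_mul_mstWeight (by positivity)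
      ((hN.separated i).mono' fun _ _ => le_of_lt) hcard
  · calc ρ * 2 ^ i * #(N i) ≤ mstWeight X * 1 := by
          gcongr
          · exact mstWeight_nonneg
          · exact_mod_cast hcard
      _ ≤ 2 * mstWeight X := by linarith [mstWeight_nonneg (X := X)]

-- Only the top `m` scales need packing: below them the scales decay geometrically and `#X ≤ 2 ^ m`.
theorem sum_mul_card_le (hN : IsNetHierarchy ρ N) (hρ : 0 ≤ ρ) {l m : ℕ}
    (hl : ρ * 2 ^ l ≤ mstWeight X) (hm : Fintype.card X ≤ 2 ^ m) :
    ∑ i ∈ range (l + 1), ρ * 2 ^ i * #(N i) ≤ (2 * m + 2) * mstWeight X := by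
  set W := mstWeight X
  have hW : 0 ≤ W := mstWeight_nonneg
  obtain ⟨p, q, hpq, hqm, hp⟩ : ∃ p q, l + 1 = p + q ∧ q ≤ m ∧ (p = 0 ∨ q = m) := by
    rcases le_total (l + 1) m with h | h
    · exact ⟨0, l + 1, by simp, h, .inl rfl⟩
    · exact ⟨l + 1 - m, m, by omega, le_rfl, .inr rfl⟩
  have hlow : ∑ i ∈ range p, ρ * 2 ^ i * #(N i) ≤ 2 * W := by
    rcases hp with rfl | rfl
    · simpa using hW
    calc ∑ i ∈ range p, ρ * 2 ^ i * #(N i) ≤ ∑ i ∈ range p, ρ * 2 ^ i * 2 ^ q := by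
          gcongr with i
          exact_mod_cast (card_le_univ (N i)).trans hm
      _ = ρ * (2 ^ p - 1) * 2 ^ q := by
          rw [← sum_mul, ← mul_sum, geom_sum_eq (by norm_num)]
          norm_num
      _ ≤ ρ * 2 ^ p * 2 ^ q := by gcongr; linarith
      _ = 2 * (ρ * 2 ^ l) := by rw [mul_assoc, ← pow_add, ← hpq, pow_succ]; ring
      _ ≤ 2 * W := by gcongr
  have hhigh : ∑ i ∈ range q, ρ * 2 ^ (p + i) * #(N (p + i)) ≤ m * (2 * W) := by
    calc ∑ i ∈ range q, ρ * 2 ^ (p + i) * #(N (p + i)) ≤ ∑ i ∈ range q, 2 * W := by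
          refine sum_le_sum fun i hi => hN.mul_card_le hρ (le_trans ?_ hl)
          have hil : p + i ≤ l := by have := mem_range.1 hi; omega
          gcongr
          exact one_le_two
      _ ≤ m * (2 * W) := by
          rw [sum_const, card_range, nsmul_eq_mul]
          gcongr
  rw [hpq, sum_range_add]
  linarith

end IsNetHierarchy

/-! ### Greedy rounding of fractional covers -/

theorem natCast_div_le_harmonic_sub (m b : ℕ) :
    (b : ℝ) / (m + b : ℕ) ≤ harmonic (m + b) - harmonic m := by
  suffices h : (b : ℚ) / (m + b : ℕ) ≤ harmonic (m + b) - harmonic m by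
    simpa using (Rat.cast_le (K := ℝ)).2 h
  rw [harmonic, harmonic, sum_range_add, add_sub_cancel_left, div_eq_mul_inv, ← nsmul_eq_mul]
  simpa only [card_range] using card_nsmul_le_sum (range b) _ _ fun i hi => by
    have : m + i + 1 ≤ m + b := by have := mem_range.1 hi; omega
    gcongr

section FractionalCover

variable {ι α : Type*} [Fintype ι] [DecidableEq α] {A : ι → Finset α} {U : Finset α} {w c : ι → ℝ}

theorem sum_mul_card_inter (A : ι → Finset α) (U : Finset α) (w : ι → ℝ) :
    ∑ i, w i * #(U ∩ A i) = ∑ a ∈ U, ∑ i with a ∈ A i, w i := by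
  simp_rw [sum_filter]
  rw [sum_comm]
  refine sum_congr rfl fun i _ => ?_
  rw [← sum_filter, sum_const, filter_mem_eq_inter, nsmul_eq_mul, mul_comm]

theorem exists_mul_card_le_mul_card_inter (hw : ∀ i, 0 ≤ w i) (hc : ∀ i, 0 ≤ c i)
    (hU : U.Nonempty) (hcover : ∀ a ∈ U, 1 ≤ ∑ i with a ∈ A i, w i) :
    ∃ i, 0 < w i ∧ (U ∩ A i).Nonempty ∧ c i * #U ≤ (∑ j, w j * c j) * #(U ∩ A i) := by
  let J : Finset ι := {i | 0 < w i ∧ (U ∩ A i).Nonempty}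
  have hJ : J.Nonempty := by
    obtain ⟨a, ha⟩ := hU
    obtain ⟨i, hi, hwi⟩ := exists_lt_of_sum_lt (s := {i | a ∈ A i}) (f := fun _ => (0 : ℝ)) (g := w)
      (by simpa using zero_lt_one.trans_le (hcover a ha))
    exact ⟨i, by simpa [J] using ⟨hwi, a, mem_inter.2 ⟨ha, (mem_filter.1 hi).2⟩⟩⟩
  have hcard : (#U : ℝ) ≤ ∑ i ∈ J, w i * #(U ∩ A i) := by
    calc (#U : ℝ) ≤ ∑ a ∈ U, ∑ i with a ∈ A i, w i := by
          simpa using card_nsmul_le_sum U _ (1 : ℝ) hcover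
      _ = ∑ i, w i * #(U ∩ A i) := (sum_mul_card_inter A U w).symm
      _ = ∑ i ∈ J, w i * #(U ∩ A i) := by
          refine (sum_subset (subset_univ J) fun i _ hi => ?_).symm
          by_contra hne
          refine hi ?_
          simpa [J, (hw i).lt_iff_ne', nonempty_iff_ne_empty] using hne
  obtain ⟨i, hi, hle⟩ := exists_le_of_sum_le hJ
    (f := fun i => w i * (c i * #U)) (g := fun i => w i * ((∑ j, w j * c j) * #(U ∩ A i))) <| by
      calc ∑ i ∈ J, w i * (c i * #U) = (∑ i ∈ J, w i * c i) * #U := by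
            simp only [sum_mul, mul_assoc]
        _ ≤ (∑ j, w j * c j) * ∑ i ∈ J, w i * #(U ∩ A i) := by
            gcongr
            · exact sum_nonneg fun j _ => mul_nonneg (hw j) (hc j)
            · exact fun j _ _ => mul_nonneg (hw j) (hc j)
            · exact subset_univ J
        _ = ∑ i ∈ J, w i * ((∑ j, w j * c j) * #(U ∩ A i)) := by
            simp only [mul_sum (s := J), mul_left_comm]
  obtain ⟨hwi, hne⟩ := (mem_filter.1 hi).2
  exact ⟨i, hwi, hne, le_of_mul_le_mul_left hle hwi⟩

theorem exists_subcover_sum_le_mul_harmonic (hw : ∀ i, 0 ≤ w i) (hc : ∀ i, 0 ≤ c i)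
    (hcover : ∀ a ∈ U, 1 ≤ ∑ i with a ∈ A i, w i) :
    ∃ I : Finset ι, (∀ i ∈ I, 0 < w i) ∧ U ⊆ I.biUnion A ∧
      ∑ i ∈ I, c i ≤ (∑ i, w i * c i) * harmonic #U := by
  classical
  induction U using Finset.strongInduction with
  | H U ih =>
  rcases U.eq_empty_or_nonempty with rfl | hU
  · exact ⟨∅, by simp, by simp, by simp⟩
  obtain ⟨i, hwi, hne, hi⟩ := exists_mul_card_le_mul_card_inter hw hc hU hcover
  have hss : U \ A i ⊂ U := sdiff_lt_left.2 fun h => not_disjoint_iff_nonempty_inter.2 hne h.symm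
  obtain ⟨I, hIw, hIU, hIc⟩ := ih _ hss fun a ha => hcover a (sdiff_subset ha)
  refine ⟨insert i I, by simpa [hwi] using hIw, ?_, ?_⟩
  · rw [biUnion_insert]
    exact sdiff_le_iff.1 hIU
  have hstep : c i ≤ (∑ j, w j * c j) * (harmonic #U - harmonic #(U \ A i)) := by
    have hsub : (#(U ∩ A i) : ℝ) / #U ≤ harmonic #U - harmonic #(U \ A i) := by
      simpa only [card_sdiff_add_card_inter] using
        natCast_div_le_harmonic_sub #(U \ A i) #(U ∩ A i)
    calc c i ≤ (∑ j, w j * c j) * #(U ∩ A i) / #U :=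
          (le_div_iff₀ (by exact_mod_cast hU.card_pos)).2 hi
      _ ≤ (∑ j, w j * c j) * (harmonic #U - harmonic #(U \ A i)) := by
          rw [mul_div_assoc]
          gcongr
          exact sum_nonneg fun j _ => mul_nonneg (hw j) (hc j)
  calc ∑ j ∈ insert i I, c j ≤ c i + ∑ j ∈ I, c j := by
        by_cases hiI : i ∈ I
        · simpa only [insert_eq_of_mem hiI] using le_add_of_nonneg_left (hc i)
        · exact (sum_insert hiI).le
    _ ≤ (∑ j, w j * c j) * harmonic #U := by linarith

end FractionalCover

/-! ### Fractional pair covers -/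

section Star

variable {X : Type*} [DecidableEq X] {S : Finset X} {a x y : X} {R : ℝ}

/-- The star on the cluster `S` with hub `a`, which turns a cluster of diameter `R` into a graph in
which all its points are within `2 * R` of one another. -/
def clusterStar (a : X) (S : Finset X) : SimpleGraph X :=
  .fromEdgeSet (S.image fun x => s(a, x))

theorem clusterStar_adj :
    (clusterStar a S).Adj x y ↔ (x = a ∧ y ∈ S ∨ y = a ∧ x ∈ S) ∧ x ≠ y := by
  simp [clusterStar]
  grind

theorem edgeCount_clusterStar_le (a : X) (S : Finset X) :
    edgeCount (clusterStar a S) ≤ #(S.erase a) := by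
  have hedges : (clusterStar a S).edgeSet ⊆ ((S.erase a).image fun x => s(a, x) : Finset _) := by
    rintro ⟨x, y⟩ hxy
    rcases clusterStar_adj.1 hxy with ⟨⟨rfl, hy⟩ | ⟨rfl, hx⟩, hne⟩
    · exact mem_coe.2 (mem_image.2 ⟨y, mem_erase.2 ⟨hne.symm, hy⟩, rfl⟩)
    · exact mem_coe.2 (mem_image.2 ⟨x, mem_erase.2 ⟨hne, hx⟩, Sym2.eq_swap⟩)
  calc edgeCount (clusterStar a S) = (clusterStar a S).edgeSet.ncard := Nat.card_coe_set_eq _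
    _ ≤ #((S.erase a).image fun x => s(a, x)) := by
        simpa only [Set.ncard_coe_finset] using Set.ncard_le_ncard hedges (finite_toSet _)
    _ ≤ #(S.erase a) := card_image_le

variable [MetricSpace X]

theorem dist_le_of_clusterStar_adj (ha : a ∈ S) (hS : ∀ x ∈ S, ∀ y ∈ S, dist x y ≤ R)
    (h : (clusterStar a S).Adj x y) : dist x y ≤ R := by
  rcases (clusterStar_adj.1 h).1 with ⟨rfl, hy⟩ | ⟨rfl, hx⟩
  exacts [hS _ ha _ hy, hS _ hx _ ha]

theorem reachableWithin_clusterStar (ha : a ∈ S) (hS : ∀ x ∈ S, ∀ y ∈ S, dist x y ≤ R)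
    (hx : x ∈ S) (hy : y ∈ S) : ReachableWithin (clusterStar a S) (2 * R) x y := by
  have hub (z) (hz : z ∈ S) : ReachableWithin (clusterStar a S) R a z := by
    rcases eq_or_ne a z with rfl | hne
    · exact .refl _ (dist_nonneg.trans (hS a ha a ha)) a
    · exact (ReachableWithin.of_adj (clusterStar_adj.2 ⟨.inl ⟨rfl, hz⟩, hne⟩)).mono le_rfl
        (hS a ha z hz)
  exact ((hub x hx).symm.trans (hub y hy)).mono le_rfl (two_mul R).ge

-- A cluster contains at most one point of `M`, and that point serves as its hub.
theorem exists_cluster_graph (N : Finset X) {M : Finset X}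
    (hM : (M : Set X).Pairwise fun x y => R < dist x y) (hS : ∀ x ∈ S, ∀ y ∈ S, dist x y ≤ R) :
    ∃ G : SimpleGraph X, edgeCount G ≤ #((N \ M) ∩ S) ∧ (∀ x y, G.Adj x y → dist x y ≤ R) ∧
      ∀ x ∈ N ∩ S, ∀ y ∈ N ∩ S, ReachableWithin G (2 * R) x y := by
  have hNS : ∀ x ∈ N ∩ S, ∀ y ∈ N ∩ S, dist x y ≤ R := fun x hx y hy =>
    hS x (mem_inter.1 hx).2 y (mem_inter.1 hy).2
  rcases (N ∩ S).eq_empty_or_nonempty with hempty | hne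
  · exact ⟨⊥, by simp [edgeCount_bot], by simp, by simp [hempty]⟩
  obtain ⟨a, ha, hhub⟩ : ∃ a ∈ N ∩ S, ∀ x ∈ (N ∩ S).erase a, x ∉ M := by
    by_cases hmeet : ∃ a ∈ N ∩ S, a ∈ M
    · obtain ⟨a, ha, haM⟩ := hmeet
      refine ⟨a, ha, fun x hx hxM => ?_⟩
      obtain ⟨hxa, hx⟩ := mem_erase.1 hx
      exact (hM hxM haM hxa).not_ge (hNS x hx a ha)
    · push Not at hmeet
      exact hne.imp fun a ha => ⟨ha, fun x hx => hmeet x (mem_of_mem_erase hx)⟩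
  refine ⟨clusterStar a (N ∩ S), (edgeCount_clusterStar_le _ _).trans (card_le_card fun x hx => ?_),
    fun x y => dist_le_of_clusterStar_adj ha hNS,
    fun x hx y hy => reachableWithin_clusterStar ha hNS hx hy⟩
  obtain ⟨hxN, hxS⟩ := mem_inter.1 (mem_of_mem_erase hx)
  exact mem_inter.2 ⟨mem_sdiff.2 ⟨hxN, hhub x hx⟩, hxS⟩

end Star

section FractionalPairCover

variable {X : Type*} [MetricSpace X] [Fintype X] [DecidableEq X] {t Δ K : ℝ} {w : Finset X → ℝ}

/-- A fractional cover of the pairs at distance at most `Δ` by clusters of diameter at most `t * Δ`,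
in which every point has total weight at most `K`. The probabilities of the clusters of a
`(t, Δ, δ)`-decomposition, divided by `δ`, are the case `K = 1 / δ`. -/
structure IsFractionalPairCover (t Δ K : ℝ) (w : Finset X → ℝ) : Prop where
  nonneg : ∀ S, 0 ≤ w S
  dist_le : ∀ S, 0 < w S → ∀ x ∈ S, ∀ y ∈ S, dist x y ≤ t * Δ
  sum_le : ∀ x, ∑ S with x ∈ S, w S ≤ K
  one_le_sum : ∀ x y, dist x y ≤ Δ → 1 ≤ ∑ S with x ∈ S ∧ y ∈ S, w S

/-- The metric space `X` has fractional pair covers with parameters `t` and `K` at every scale, the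
analogue for fractional covers of `IsDecomposable`. -/
def HasFractionalPairCovers (X : Type*) [MetricSpace X] [Fintype X] [DecidableEq X]
    (t K : ℝ) : Prop :=
  ∀ Δ > 0, ∃ w : Finset X → ℝ, IsFractionalPairCover t Δ K w

namespace IsFractionalPairCover

theorem exists_clusters (hw : IsFractionalPairCover t Δ K w) (D : Finset X) :
    ∃ 𝒞 : Finset (Finset X), (∀ S ∈ 𝒞, ∀ x ∈ S, ∀ y ∈ S, dist x y ≤ t * Δ) ∧
      (∀ x y, dist x y ≤ Δ → ∃ S ∈ 𝒞, x ∈ S ∧ y ∈ S) ∧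
      ∑ S ∈ 𝒞, (#(D ∩ S) : ℝ) ≤ K * #D * (1 + 2 * Real.log (Fintype.card X)) := by
  let U : Finset (X × X) := {p | dist p.1 p.2 ≤ Δ}
  obtain ⟨𝒞, hpos, hcover, hsum⟩ := exists_subcover_sum_le_mul_harmonic (U := U)
    (A := fun S : Finset X => S ×ˢ S) (c := fun S => #(D ∩ S)) hw.nonneg
    (fun S => Nat.cast_nonneg _) fun p hp => by
      simpa only [mem_product] using hw.one_le_sum p.1 p.2 (mem_filter.1 hp).2
  refine ⟨𝒞, fun S hS => hw.dist_le S (hpos S hS), fun x y hxy => ?_, hsum.trans ?_⟩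
  · obtain ⟨S, hS, hxyS⟩ := mem_biUnion.1 (hcover (mem_filter.2 ⟨mem_univ (x, y), hxy⟩))
    exact ⟨S, hS, mem_product.1 hxyS⟩
  have hcost : ∑ S, w S * #(D ∩ S) ≤ K * #D := by
    calc ∑ S, w S * #(D ∩ S) = ∑ x ∈ D, ∑ S with x ∈ S, w S := sum_mul_card_inter id D w
      _ ≤ #D • K := sum_le_card_nsmul _ _ _ fun x _ => hw.sum_le x
      _ = K * #D := by rw [nsmul_eq_mul, mul_comm]
  have hlog : Real.log #U ≤ 2 * Real.log (Fintype.card X) := by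
    have hU : #U ≤ Fintype.card X ^ 2 := by
      simpa only [Fintype.card_prod, ← sq] using card_le_univ U
    rcases (#U).eq_zero_or_pos with h0 | h0
    · simpa [h0] using Real.log_natCast_nonneg _
    · calc Real.log #U ≤ Real.log ((Fintype.card X : ℝ) ^ 2) :=
            Real.log_le_log (by exact_mod_cast h0) (by exact_mod_cast hU)
        _ = 2 * Real.log (Fintype.card X) := by rw [Real.log_pow]; norm_num
  calc (∑ S, w S * #(D ∩ S)) * harmonic #U
      ≤ (∑ S, w S * #(D ∩ S)) * (1 + 2 * Real.log (Fintype.card X)) := by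
        gcongr
        · exact sum_nonneg fun S _ => mul_nonneg (hw.nonneg S) (Nat.cast_nonneg _)
        · exact (harmonic_le_one_add_log _).trans (by gcongr)
    _ ≤ K * #D * (1 + 2 * Real.log (Fintype.card X)) := by
        have := Real.log_natCast_nonneg (Fintype.card X)
        gcongr

theorem exists_scale_graph (hw : IsFractionalPairCover t Δ K w) (N : Finset X) {M : Finset X}
    (hM : (M : Set X).Pairwise fun x y => t * Δ < dist x y) :
    ∃ G : SimpleGraph X,
      edgeCount G ≤ K * #(N \ M) * (1 + 2 * Real.log (Fintype.card X)) ∧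
      (∀ x y, G.Adj x y → dist x y ≤ t * Δ) ∧
      ∀ x ∈ N, ∀ y ∈ N, dist x y ≤ Δ → ReachableWithin G (2 * (t * Δ)) x y := by
  obtain ⟨𝒞, hdiam, hpair, hsum⟩ := hw.exists_clusters (N \ M)
  choose! G hcount hadj hreach using fun S hS => exists_cluster_graph N hM (hdiam S hS)
  refine ⟨𝒞.sup G, le_trans ?_ hsum, fun x y hxy => ?_, fun x hx y hy hxy => ?_⟩
  · exact_mod_cast (edgeCount_finsetSup_le 𝒞 G).trans (sum_le_sum hcount)
  · obtain ⟨S, hS, hxyS⟩ : ∃ S ∈ 𝒞, (G S).Adj x y := by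
      simpa [Finset.sup_eq_iSup] using hxy
    exact hadj S hS x y hxyS
  · obtain ⟨S, hS, hxS, hyS⟩ := hpair x y hxy
    exact (hreach S hS x (mem_inter.2 ⟨hx, hxS⟩) y (mem_inter.2 ⟨hy, hyS⟩)).mono
      (le_sup hS) le_rfl

end IsFractionalPairCover

end FractionalPairCover

/-! ### The hierarchical spanner -/

namespace IsNetHierarchy

variable {X : Type*} [MetricSpace X] [Fintype X] {ρ B c r t K : ℝ} {N : ℕ → Finset X}
  {H : SimpleGraph X} {G : ℕ → SimpleGraph X} {k l m : ℕ}

theorem exists_reachableWithin (hN : IsNetHierarchy ρ N) (hρ : 0 ≤ ρ) (hc : 0 ≤ c)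
    (hH : ∀ i ≤ l, ∀ x ∈ N i, ∀ y ∈ N i, dist x y ≤ 6 * (ρ * 2 ^ i) →
      ReachableWithin H (c * (ρ * 2 ^ i)) x y) {i : ℕ} (hi : i ≤ l) (x : X) :
    ∃ y ∈ N i, dist x y ≤ 2 * (ρ * 2 ^ i) ∧ ReachableWithin H (c * (ρ * 2 ^ i)) x y := by
  induction i with
  | zero =>
    exact ⟨x, hN.zero ▸ mem_univ x, by rw [dist_self]; positivity, .refl H (by positivity) x⟩
  | succ i ih =>
    obtain ⟨y, hy, hxy, hreach⟩ := ih (i.le_succ.trans hi)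
    obtain ⟨z, hz, hyz⟩ := hN.cover i y hy
    have hscale : 0 ≤ ρ * 2 ^ i := by positivity
    have hstep := hH i (i.le_succ.trans hi) y hy z (hN.antitone i.le_succ hz)
      (by rw [pow_succ] at hyz; linarith)
    refine ⟨z, hz, ?_, (hreach.trans hstep).mono le_rfl (by rw [pow_succ]; linarith)⟩
    rw [pow_succ] at hyz ⊢
    linarith [dist_triangle x y z]

theorem isSpanner (hN : IsNetHierarchy ρ N) (hρ : 0 < ρ) (hc : 0 ≤ c)
    (hl : ∀ x y : X, dist x y < ρ * 2 ^ (l + 1))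
    (hH : ∀ i ≤ l, ∀ x ∈ N i, ∀ y ∈ N i, dist x y ≤ 6 * (ρ * 2 ^ i) →
      ReachableWithin H (c * (ρ * 2 ^ i)) x y) : IsSpanner H (3 * c) := by
  refine isSpanner_of_reachableWithin fun u v => ?_
  rcases eq_or_ne u v with rfl | huv
  · exact .refl H (by simp) u
  have hsep : ρ < dist u v := by
    simpa using hN.separated 0 (hN.zero ▸ mem_univ u) (hN.zero ▸ mem_univ v) huv
  obtain ⟨i, hlow, hupp⟩ := exists_nat_pow_near ((one_le_div hρ).2 hsep.le) one_lt_two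
  rw [le_div_iff₀' hρ] at hlow
  rw [div_lt_iff₀' hρ] at hupp
  have hil : i ≤ l := by
    have hpow : (2 : ℝ) ^ i < 2 ^ (l + 1) := lt_of_mul_lt_mul_left (hlow.trans_lt (hl u v)) hρ.le
    exact Nat.lt_succ_iff.1 ((pow_lt_pow_iff_right₀ one_lt_two).1 hpow)
  obtain ⟨u', hu', huu', hu⟩ := hN.exists_reachableWithin hρ.le hc hH hil u
  obtain ⟨v', hv', hvv', hv⟩ := hN.exists_reachableWithin hρ.le hc hH hil v
  have hdist : dist u' v' ≤ 6 * (ρ * 2 ^ i) := by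
    rw [pow_succ] at hupp
    linarith [dist_triangle4 u' u v v', dist_comm u u']
  refine ((hu.trans (hH i hil u' hu' v' hv' hdist)).trans hv.symm).mono le_rfl ?_
  linarith [mul_le_mul_of_nonneg_left hlow hc]

theorem edgeCount_sup_range_le [DecidableEq X] (hN : IsNetHierarchy ρ N) (hB : 0 ≤ B)
    (hG : ∀ i, edgeCount (G i) ≤ B * #(N i \ N (i + k))) (l : ℕ) :
    edgeCount ((range l).sup G) ≤ B * (k * Fintype.card X) := by
  calc (edgeCount ((range l).sup G) : ℝ) ≤ ∑ i ∈ range l, (edgeCount (G i) : ℝ) := by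
        exact_mod_cast edgeCount_finsetSup_le (range l) G
    _ ≤ ∑ i ∈ range l, B * #(N i \ N (i + k)) := sum_le_sum fun i _ => hG i
    _ = B * ∑ i ∈ range l, (#(N i \ N (i + k)) : ℝ) := (mul_sum _ _ _).symm
    _ ≤ B * (k * Fintype.card X) := by
        gcongr
        exact_mod_cast sum_card_sdiff_le hN.antitone k l

theorem graphWeight_sup_range_le (hN : IsNetHierarchy ρ N) (hρ : 0 ≤ ρ) (hB : 0 ≤ B) (hr : 0 ≤ r)
    (hG : ∀ i, edgeCount (G i) ≤ B * #(N i))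
    (hadj : ∀ i x y, (G i).Adj x y → dist x y ≤ r * (ρ * 2 ^ i))
    (hl : ρ * 2 ^ l ≤ mstWeight X) (hm : Fintype.card X ≤ 2 ^ m) :
    graphWeight ((range (l + 1)).sup G) ≤ B * r * ((2 * m + 2) * mstWeight X) := by
  calc graphWeight ((range (l + 1)).sup G) ≤ ∑ i ∈ range (l + 1), graphWeight (G i) :=
        graphWeight_finsetSup_le _ _
    _ ≤ ∑ i ∈ range (l + 1), B * r * (ρ * 2 ^ i * #(N i)) := by
        refine sum_le_sum fun i _ => (graphWeight_le_edgeCount_mul (hadj i)).trans ?_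
        calc edgeCount (G i) * (r * (ρ * 2 ^ i)) ≤ B * #(N i) * (r * (ρ * 2 ^ i)) := by
              gcongr
              exact hG i
          _ = B * r * (ρ * 2 ^ i * #(N i)) := by ring
    _ = B * r * ∑ i ∈ range (l + 1), ρ * 2 ^ i * #(N i) := (mul_sum _ _ _).symm
    _ ≤ B * r * ((2 * m + 2) * mstWeight X) := by
        gcongr
        exact hN.sum_mul_card_le hρ hl hm

theorem exists_scale_graphs [DecidableEq X] (hN : IsNetHierarchy ρ N) (hρ : 0 < ρ)
    (hX : HasFractionalPairCovers X t K) (hk : 6 * t ≤ 2 ^ k) :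
    ∃ G : ℕ → SimpleGraph X, ∀ i,
      edgeCount (G i) ≤ K * (1 + 2 * Real.log (Fintype.card X)) * #(N i \ N (i + k)) ∧
      (∀ x y, (G i).Adj x y → dist x y ≤ 6 * t * (ρ * 2 ^ i)) ∧
      ∀ x ∈ N i, ∀ y ∈ N i, dist x y ≤ 6 * (ρ * 2 ^ i) →
        ReachableWithin (G i) (12 * t * (ρ * 2 ^ i)) x y := by
  choose w hw using fun i : ℕ => hX (6 * (ρ * 2 ^ i)) (by positivity)
  have hM (i) : (N (i + k) : Set X).Pairwise fun x y => t * (6 * (ρ * 2 ^ i)) < dist x y :=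
    (hN.separated (i + k)).mono' fun x y hxy => by
      calc t * (6 * (ρ * 2 ^ i)) = 6 * t * (ρ * 2 ^ i) := by ring
        _ ≤ 2 ^ k * (ρ * 2 ^ i) := by gcongr
        _ = ρ * 2 ^ (i + k) := by rw [pow_add]; ring
        _ < dist x y := hxy
  choose G hcount hadj hreach using fun i => (hw i).exists_scale_graph (N i) (hM i)
  exact ⟨G, fun i => ⟨(hcount i).trans_eq (by ring),
    fun x y hxy => (hadj i x y hxy).trans_eq (by ring),
    fun x hx y hy hxy => (hreach i x hx y hy hxy).mono le_rfl (by linarith)⟩⟩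

end IsNetHierarchy

theorem exists_mul_two_pow_near_mstWeight {X : Type*} [MetricSpace X] [Fintype X] [Nontrivial X]
    {ρ : ℝ} (hρ : 0 < ρ) (hsep : ∀ x y : X, x ≠ y → ρ < dist x y) :
    ∃ l : ℕ, ρ * 2 ^ l ≤ mstWeight X ∧ mstWeight X < ρ * 2 ^ (l + 1) := by
  obtain ⟨x, y, hxy⟩ := exists_pair_ne X
  have hρW : ρ ≤ mstWeight X := (hsep x y hxy).le.trans (dist_le_mstWeight x y)
  simpa only [le_div_iff₀' hρ, div_lt_iff₀' hρ] using
    exists_nat_pow_near ((one_le_div hρ).2 hρW) one_lt_two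

theorem exists_lt_two_pow_mul_log_le {x : ℝ} (hx : 1 ≤ x) :
    ∃ k : ℕ, x < 2 ^ k ∧ k * Real.log 2 ≤ Real.log 2 + Real.log x := by
  obtain ⟨k, hlow, hupp⟩ := exists_nat_pow_near hx one_lt_two
  refine ⟨k + 1, hupp, ?_⟩
  have hlog : k * Real.log 2 ≤ Real.log x := by
    simpa only [Real.log_pow] using Real.log_le_log (by positivity) hlow
  push_cast
  linarith

theorem exists_six_mul_le_two_pow {t : ℝ} (ht : 2 ≤ t) :
    ∃ k : ℕ, 6 * t ≤ 2 ^ k ∧ k ≤ 8 * Real.log t := by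
  obtain ⟨k, hk, hklog⟩ := exists_lt_two_pow_mul_log_le (x := 6 * t) (by linarith)
  refine ⟨k, hk.le, ?_⟩
  have hlog6t : Real.log (6 * t) ≤ 3 * Real.log 2 + Real.log t := by
    calc Real.log (6 * t) ≤ Real.log (2 ^ 3 * t) :=
          Real.log_le_log (by positivity) (by linarith)
      _ = 3 * Real.log 2 + Real.log t := by
          rw [Real.log_mul (by positivity) (by positivity), Real.log_pow]
          norm_num
  have hlogt : Real.log 2 ≤ Real.log t := Real.log_le_log two_pos ht
  nlinarith [Real.log_two_gt_d9]

theorem exists_le_two_pow {n : ℕ} (hn : 2 ≤ n) :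
    ∃ m : ℕ, n ≤ 2 ^ m ∧ 2 * m + 2 ≤ 9 * Real.log n := by
  have hn' : (2 : ℝ) ≤ n := by exact_mod_cast hn
  obtain ⟨m, hm, hmlog⟩ := exists_lt_two_pow_mul_log_le (x := n) (by linarith)
  refine ⟨m, by exact_mod_cast hm.le, ?_⟩
  have hlogn : Real.log 2 ≤ Real.log n := Real.log_le_log two_pos hn'
  nlinarith [Real.log_two_gt_d9]

namespace HasFractionalPairCovers

variable {X : Type*} [MetricSpace X] [Fintype X] [DecidableEq X] {t K : ℝ}

theorem nonneg [Nonempty X] (hX : HasFractionalPairCovers X t K) : 0 ≤ K := by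
  obtain ⟨w, hw⟩ := hX 1 one_pos
  exact (sum_nonneg fun S _ => hw.nonneg S).trans (hw.sum_le (Classical.arbitrary X))

theorem exists_light_spanner_of_nontrivial [Nontrivial X] (hX : HasFractionalPairCovers X t K)
    (ht : 2 ≤ t) :
    ∃ H : SimpleGraph X, IsSpanner H (36 * t) ∧
      graphWeight H ≤ 216 * K * t * Real.log (Fintype.card X) ^ 2 * mstWeight X ∧
      edgeCount H ≤ 32 * K * Fintype.card X * Real.log (Fintype.card X) * Real.log t := by
  have hn : 2 ≤ Fintype.card X := Fintype.one_lt_card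
  obtain ⟨k, hk, hklog⟩ := exists_six_mul_le_two_pow ht
  obtain ⟨m, hm, hmlog⟩ := exists_le_two_pow hn
  obtain ⟨ρ, hρ, hsep⟩ := exists_pos_lt_dist X
  obtain ⟨N, hN⟩ := exists_isNetHierarchy hρ.le hsep
  obtain ⟨G, hG⟩ := hN.exists_scale_graphs hρ hX hk
  obtain ⟨l, hl, hl'⟩ := exists_mul_two_pow_near_mstWeight hρ hsep
  have hK : 0 ≤ K := hX.nonneg
  have hW : 0 ≤ mstWeight X := mstWeight_nonneg
  have hlogn : Real.log 2 ≤ Real.log (Fintype.card X) :=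
    Real.log_le_log two_pos (by exact_mod_cast hn)
  set n : ℝ := Nat.cast (Fintype.card X)
  have hlog : 1 + 2 * Real.log n ≤ 4 * Real.log n := by linarith [Real.log_two_gt_d9]
  have hB : 0 ≤ K * (1 + 2 * Real.log n) := by nlinarith [Real.log_two_gt_d9]
  refine ⟨(range (l + 1)).sup G, ?_, ?_, ?_⟩
  · have hreach (i) (hi : i ≤ l) (x) (hx : x ∈ N i) (y) (hy : y ∈ N i)
        (hxy : dist x y ≤ 6 * (ρ * 2 ^ i)) :=
      ((hG i).2.2 x hx y hy hxy).mono (le_sup (mem_range_succ_iff.2 hi)) le_rfl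
    exact (hN.isSpanner hρ (by positivity) (fun x y => (dist_le_mstWeight x y).trans_lt hl')
      hreach).mono (by linarith)
  · refine (hN.graphWeight_sup_range_le hρ.le hB (by positivity : 0 ≤ 6 * t)
      (fun i => (hG i).1.trans ?_) (fun i => (hG i).2.1) hl hm).trans ?_
    · gcongr
      exact sdiff_subset
    · calc K * (1 + 2 * Real.log n) * (6 * t) * ((2 * m + 2) * mstWeight X)
          ≤ K * (4 * Real.log n) * (6 * t) * (9 * Real.log n * mstWeight X) := by gcongr
        _ = 216 * K * t * Real.log n ^ 2 * mstWeight X := by ring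
  · calc (edgeCount ((range (l + 1)).sup G) : ℝ)
        ≤ K * (1 + 2 * Real.log n) * (k * n) :=
          hN.edgeCount_sup_range_le hB (fun i => (hG i).1) (l + 1)
      _ ≤ K * (4 * Real.log n) * (8 * Real.log t * n) := by gcongr
      _ = 32 * K * n * Real.log n * Real.log t := by ring

theorem exists_light_spanner (hX : HasFractionalPairCovers X t K) (ht : 2 ≤ t) :
    ∃ H : SimpleGraph X, IsSpanner H (36 * t) ∧
      graphWeight H ≤ 216 * K * t * Real.log (Fintype.card X) ^ 2 * mstWeight X ∧
      edgeCount H ≤ 32 * K * Fintype.card X * Real.log (Fintype.card X) * Real.log t := by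
  cases subsingleton_or_nontrivial X with
  | inr _ => exact hX.exists_light_spanner_of_nontrivial ht
  | inl _ =>
    have hlog : Real.log (Fintype.card X) = 0 := by
      have hcard : Fintype.card X ≤ 1 := Fintype.card_le_one_iff_subsingleton.2 ‹_›
      interval_cases Fintype.card X <;> simp
    refine ⟨⊥, isSpanner_of_reachableWithin fun u v => ?_, ?_, ?_⟩
    · obtain rfl := Subsingleton.elim u v
      exact .refl ⊥ (by simp) u
    · simp [graphWeight_bot, hlog]
    · simp [edgeCount_bot, hlog]

end HasFractionalPairCovers

/-! ### Covers of Euclidean point sets by random balls -/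

section MeasurableFamily

variable {Ω X : Type*} [Fintype X] {B : X → Set Ω}

open scoped Classical in
/-- The cluster of all points `x` whose set `B x` contains the center `ω`. -/
noncomputable def clusterAt (B : X → Set Ω) (ω : Ω) : Finset X := {x | ω ∈ B x}

theorem mem_clusterAt {ω : Ω} {x : X} : x ∈ clusterAt B ω ↔ ω ∈ B x := by
  simp [clusterAt]

variable [MeasurableSpace Ω] {μ : Measure Ω}

theorem measurableSet_preimage_clusterAt (hB : ∀ x, MeasurableSet (B x)) (S : Finset X) :
    MeasurableSet (clusterAt B ⁻¹' {S}) := by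
  have hS : clusterAt B ⁻¹' {S} = ⋂ x, {ω | ω ∈ B x ↔ x ∈ S} := by
    ext ω
    simp [Finset.ext_iff, mem_clusterAt]
  rw [hS]
  exact .iInter fun x => (hB x).iff (.const _)

variable [DecidableEq X]

theorem sum_measureReal_preimage_clusterAt (hB : ∀ x, MeasurableSet (B x))
    (hfin : ∀ x, μ (B x) ≠ ⊤) (x y : X) :
    ∑ S with x ∈ S ∧ y ∈ S, μ.real (clusterAt B ⁻¹' {S}) = μ.real (B x ∩ B y) := by
  have hpre (S : Finset X) (hS : S ∈ ({S | x ∈ S ∧ y ∈ S} : Finset (Finset X))) :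
      μ (clusterAt B ⁻¹' {S}) ≠ ⊤ := by
    refine measure_ne_top_of_subset (fun ω hω => ?_) (hfin x)
    rw [← mem_clusterAt, Set.mem_singleton_iff.1 hω]
    exact (mem_filter.1 hS).2.1
  rw [sum_measureReal_preimage_singleton _
    (fun S _ => measurableSet_preimage_clusterAt hB S) hpre]
  congr 1
  ext ω
  simp [mem_clusterAt]

-- A cluster receives the measure of the set of centers it arises from.
theorem exists_isFractionalPairCover_of_measure [MetricSpace X] {t Δ K c : ℝ}
    (hB : ∀ x, MeasurableSet (B x)) (hfin : ∀ x, μ (B x) ≠ ⊤)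
    (hdist : ∀ ω x y, ω ∈ B x → ω ∈ B y → dist x y ≤ t * Δ) (hc : 0 < c)
    (hupper : ∀ x, μ.real (B x) ≤ K * c)
    (hlower : ∀ x y, dist x y ≤ Δ → c ≤ μ.real (B x ∩ B y)) :
    ∃ w : Finset X → ℝ, IsFractionalPairCover t Δ K w := by
  have hsum (x y : X) : ∑ S with x ∈ S ∧ y ∈ S, μ.real (clusterAt B ⁻¹' {S}) / c =
      μ.real (B x ∩ B y) / c := by
    rw [← sum_div, sum_measureReal_preimage_clusterAt hB hfin]
  refine ⟨fun S => μ.real (clusterAt B ⁻¹' {S}) / c, fun S => by positivity,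
    fun S hS x hx y hy => ?_, fun x => ?_, fun x y hxy => ?_⟩
  · obtain ⟨ω, rfl⟩ : (clusterAt B ⁻¹' {S}).Nonempty := by
      by_contra! hempty
      simp [hempty] at hS
    exact hdist ω x y (mem_clusterAt.1 hx) (mem_clusterAt.1 hy)
  · simpa only [and_self, Set.inter_self, div_le_iff₀ hc] using
      (hsum x x).trans_le ((div_le_iff₀ hc).2 (by simpa using hupper x))
  · rw [hsum, one_le_div hc]
    exact hlower x y hxy

end MeasurableFamily

theorem one_le_two_rpow_mul_sqrt {a : ℝ} (ha : 0 ≤ a) (ha' : a ≤ 1 / 2) :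
    1 ≤ 2 ^ a * √(1 - a) := by
  have hbernoulli : ((1 / 2 : ℝ) ^ a) ^ 2 ≤ 1 - a := by
    have h := rpow_one_add_le_one_add_mul_self (s := -1 / 2) (p := 2 * a) (by norm_num)
      (by positivity) (by linarith)
    rw [← Real.rpow_mul_natCast (by positivity)]
    convert h using 2 <;> push_cast <;> ring
  calc (1 : ℝ) = 2 ^ a * (1 / 2) ^ a := by
        rw [← Real.mul_rpow (by positivity) (by positivity)]
        norm_num
    _ ≤ 2 ^ a * √(1 - a) := by
        gcongr
        exact Real.le_sqrt_of_sq_le hbernoulli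

section Ball

open Metric Module

variable {E : Type*} [NormedAddCommGroup E] [InnerProductSpace ℝ E] {r R t : ℝ} {x y : E}

theorem add_mem_closedBall_inter_closedBall {z : E} (hr : 0 ≤ r) (hrR : r ≤ R)
    (hxy : dist x y ≤ r) (hz : ‖z‖ ^ 2 ≤ R ^ 2 - r ^ 2) (hinner : 0 ≤ inner ℝ z (y - x)) :
    x + z ∈ closedBall x R ∩ closedBall y R := by
  have hR : 0 ≤ R := hr.trans hrR
  have hdist : ‖y - x‖ ^ 2 ≤ r ^ 2 := by
    gcongr
    rwa [← dist_eq_norm, dist_comm]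
  constructor <;> refine mem_closedBall_iff_norm.2 (le_of_sq_le_sq ?_ hR)
  · rw [add_sub_cancel_left]
    linarith [sq_nonneg r]
  · rw [show x + z - y = z - (y - x) by abel, norm_sub_sq_real]
    linarith

variable [MeasurableSpace E] [BorelSpace E] [FiniteDimensional ℝ E] (μ : Measure E)

theorem measureReal_closedBall_le_two_mul_inter_halfSpace [IsFiniteMeasureOnCompacts μ]
    [μ.IsNegInvariant] (r : ℝ) (u : E) :
    μ.real (closedBall 0 r) ≤ 2 * μ.real (closedBall 0 r ∩ {z | 0 ≤ inner ℝ z u}) := by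
  set A : Set E := closedBall 0 r ∩ {z | 0 ≤ inner ℝ z u}
  have hA : μ A ≠ ⊤ := measure_ne_top_of_subset Set.inter_subset_left measure_closedBall_lt_top.ne
  have hneg : μ (-A) = μ A := Measure.measure_neg μ A
  have hcover : closedBall 0 r ⊆ A ∪ -A := fun z hz => by
    rcases le_total 0 (inner ℝ z u) with h | h
    · exact .inl ⟨hz, h⟩
    · exact .inr ⟨by simpa using hz, by simpa using h⟩
  calc μ.real (closedBall 0 r) ≤ μ.real (A ∪ -A) :=
        measureReal_mono hcover (measure_union_ne_top hA (hneg ▸ hA))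
    _ ≤ μ.real A + μ.real (-A) := measureReal_union_le _ _
    _ = 2 * μ.real A := by
        rw [measureReal_def μ (-A), hneg, ← measureReal_def, two_mul]

variable [μ.IsAddHaarMeasure]

-- Half of the ball of radius `√(R ^ 2 - r ^ 2)` around `x`, the half facing `y`, lies in the lens.
theorem measureReal_closedBall_sqrt_le_two_mul_inter (hr : 0 ≤ r) (hrR : r ≤ R)
    (hxy : dist x y ≤ r) :
    μ.real (closedBall 0 √(R ^ 2 - r ^ 2)) ≤
      2 * μ.real (closedBall x R ∩ closedBall y R) := by
  have hsq : 0 ≤ R ^ 2 - r ^ 2 := by nlinarith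
  set A : Set E := closedBall 0 √(R ^ 2 - r ^ 2) ∩ {z | 0 ≤ inner ℝ z (y - x)}
  have hA : A ⊆ (x + ·) ⁻¹' (closedBall x R ∩ closedBall y R) := fun z hz =>
    add_mem_closedBall_inter_closedBall hr hrR hxy
      ((Real.le_sqrt (norm_nonneg z) hsq).1 (mem_closedBall_zero_iff.1 hz.1)) hz.2
  have hfin : μ (closedBall x R ∩ closedBall y R) ≠ ⊤ :=
    measure_ne_top_of_subset Set.inter_subset_left measure_closedBall_lt_top.ne
  calc μ.real (closedBall 0 √(R ^ 2 - r ^ 2)) ≤ 2 * μ.real A :=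
        measureReal_closedBall_le_two_mul_inter_halfSpace μ _ _
    _ ≤ 2 * μ.real ((x + ·) ⁻¹' (closedBall x R ∩ closedBall y R)) := by
        gcongr
        rwa [measure_preimage_add]
    _ = 2 * μ.real (closedBall x R ∩ closedBall y R) := by
        simp only [measureReal_def, measure_preimage_add]

theorem measureReal_closedBall_mul_le (ht : 2 ≤ t) (hr : 0 ≤ r) (x : E) :
    μ.real (closedBall x (t * r)) ≤
      2 ^ (finrank ℝ E / t ^ 2) * μ.real (closedBall 0 √((t * r) ^ 2 - r ^ 2)) := by
  have ht2 : (2 : ℝ) ^ 2 ≤ t ^ 2 := by gcongr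
  have hinv : 1 / t ^ 2 ≤ 1 / 2 := by
    gcongr
    linarith
  have hsqrt : √((t * r) ^ 2 - r ^ 2) = √(1 - 1 / t ^ 2) * (t * r) := by
    rw [← Real.sqrt_sq (by positivity : 0 ≤ t * r), ← Real.sqrt_mul (by linarith),
      Real.sqrt_sq (by positivity)]
    congr 1
    field_simp
  have hradius : t * r ≤ 2 ^ (1 / t ^ 2) * √((t * r) ^ 2 - r ^ 2) := by
    rw [hsqrt, ← mul_assoc]
    exact le_mul_of_one_le_left (by positivity)
      (one_le_two_rpow_mul_sqrt (by positivity) hinv)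
  rw [Measure.addHaar_real_closedBall μ x (by positivity),
    Measure.addHaar_real_closedBall μ 0 (Real.sqrt_nonneg _)]
  calc (t * r) ^ finrank ℝ E * μ.real (ball 0 1)
      ≤ (2 ^ (1 / t ^ 2) * √((t * r) ^ 2 - r ^ 2)) ^ finrank ℝ E * μ.real (ball 0 1) := by
        gcongr
    _ = _ := by
        rw [mul_pow, mul_assoc, ← Real.rpow_mul_natCast zero_le_two, one_div_mul_eq_div]

theorem measureReal_closedBall_le_mul_inter (ht : 2 ≤ t) (hr : 0 ≤ r) (hxy : dist x y ≤ r) (z : E) :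
    μ.real (closedBall z (t * r)) ≤ 2 * 2 ^ (finrank ℝ E / t ^ 2) *
      μ.real (closedBall x (t * r) ∩ closedBall y (t * r)) := by
  calc μ.real (closedBall z (t * r))
      ≤ 2 ^ (finrank ℝ E / t ^ 2) * μ.real (closedBall 0 √((t * r) ^ 2 - r ^ 2)) :=
        measureReal_closedBall_mul_le μ ht hr z
    _ ≤ 2 ^ (finrank ℝ E / t ^ 2) *
          (2 * μ.real (closedBall x (t * r) ∩ closedBall y (t * r))) := by
        gcongr
        exact measureReal_closedBall_sqrt_le_two_mul_inter μ hr (by nlinarith) hxy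
    _ = _ := by ring

end Ball

open Metric Module in
theorem hasFractionalPairCovers_finset {E : Type*} [NormedAddCommGroup E] [InnerProductSpace ℝ E]
    [FiniteDimensional ℝ E] [DecidableEq E] (s : Finset E) {t : ℝ} (ht : 2 ≤ t) :
    HasFractionalPairCovers s (2 * t) (2 * 2 ^ (finrank ℝ E / t ^ 2)) := by
  intro Δ hΔ
  borelize E
  let μ : Measure E := .addHaar
  have hball (x : s) : μ (closedBall (x : E) (t * Δ)) ≠ ⊤ := measure_closedBall_lt_top.ne
  let V := μ.real (closedBall (0 : E) (t * Δ))
  have hV : 0 < V := ENNReal.toReal_pos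
    (measure_closedBall_pos μ 0 (by positivity)).ne' measure_closedBall_lt_top.ne
  refine exists_isFractionalPairCover_of_measure (c := V / (2 * 2 ^ (finrank ℝ E / t ^ 2)))
    (fun _ => measurableSet_closedBall) hball (fun ω x y hx hy => ?_) (by positivity)
    (fun x => ?_) (fun x y hxy => ?_)
  · calc dist (x : E) y ≤ dist ω x + dist ω y := dist_triangle_left _ _ _
      _ ≤ t * Δ + t * Δ := add_le_add hx hy
      _ = 2 * t * Δ := by ring
  · rw [mul_div_cancel₀ _ (by positivity), Measure.addHaar_real_closedBall_center]
  · rw [div_le_iff₀' (by positivity)]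
    exact measureReal_closedBall_le_mul_inter μ ht hΔ.le hxy 0

open Module in
theorem euclidean_low_dim_light_spanner_general :
    ∃ C : ℝ, 0 < C ∧
      ∀ (E : Type*) [NormedAddCommGroup E] [InnerProductSpace ℝ E] [FiniteDimensional ℝ E]
        (s : Finset E) (t : ℝ), 2 ≤ t →
        ∃ H : SimpleGraph s,
          IsSpanner H (C * t) ∧
          graphWeight H ≤
            C * t * 2 ^ (C * finrank ℝ E / t ^ 2) * Real.log #s ^ 2 * mstWeight s ∧
          edgeCount H ≤
            C * #s * 2 ^ (C * finrank ℝ E / t ^ 2) * Real.log #s * Real.log t := by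
  classical
  refine ⟨864, by norm_num, fun E _ _ _ s t ht => ?_⟩
  borelize E
  obtain ⟨H, hspan, hweight, hcount⟩ :=
    (hasFractionalPairCovers_finset s ht).exists_light_spanner (by linarith)
  have hlogt : Real.log (2 * t) ≤ 2 * Real.log t := by
    rw [Real.log_mul two_ne_zero (by positivity), two_mul]
    gcongr
  have hexp : (2 : ℝ) ^ (finrank ℝ E / t ^ 2) ≤ 2 ^ (864 * finrank ℝ E / t ^ 2) := by
    gcongr
    · exact one_le_two
    · exact le_mul_of_one_le_left (Nat.cast_nonneg _) (by norm_num)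
  have hlog : 0 ≤ Real.log #s := Real.log_natCast_nonneg _
  have hlogt' : 0 ≤ Real.log t := Real.log_nonneg (by linarith)
  have hmst : 0 ≤ mstWeight s := mstWeight_nonneg
  rw [Fintype.card_coe] at hweight hcount
  refine ⟨H, hspan.mono (by linarith), hweight.trans ?_, hcount.trans ?_⟩
  · calc 216 * (2 * 2 ^ (finrank ℝ E / t ^ 2)) * (2 * t) * Real.log #s ^ 2 * mstWeight s
        = 864 * t * 2 ^ (finrank ℝ E / t ^ 2) * Real.log #s ^ 2 * mstWeight s := by ring
      _ ≤ _ := by gcongr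
  · calc 32 * (2 * 2 ^ (finrank ℝ E / t ^ 2)) * #s * Real.log #s * Real.log (2 * t)
        ≤ 32 * (2 * 2 ^ (864 * finrank ℝ E / t ^ 2)) * #s * Real.log #s * (2 * Real.log t) := by
          gcongr
          exact Real.log_nonneg (by linarith)
      _ = 128 * #s * 2 ^ (864 * finrank ℝ E / t ^ 2) * Real.log #s * Real.log t := by ring
      _ ≤ _ := by
          gcongr
          norm_num

/-- For every set of `n` points in `ℝ^d` with minimum pairwise distance
`1`, every `ε ∈ (0, 1/8)` and every `2 ≤ t ≤ √(2d/ln d)`, there is an `O(t)`-spanner with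
lightness `O_ε(t·2^{O(d/t²)}·log² n)` and `O_ε(n·2^{O(d/t²)}·log n·log t)` edges. -/
theorem euclidean_low_dim_light_spanner :
    ∃ (C : ℝ) (k : ℕ), 0 < C ∧
      ∀ (d : ℕ) (s : Finset (EuclideanSpace ℝ (Fin d))) (ε t : ℝ),
        (∀ x ∈ s, ∀ y ∈ s, x ≠ y → 1 ≤ dist x y) →
        0 < ε → ε < 1 / 8 →
        2 ≤ t → t ≤ Real.sqrt (2 * d / Real.log d) →
        ∃ H : SimpleGraph ↥s,
          IsSpanner H (C * t) ∧
          graphWeight H ≤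
            C * (1 / ε) ^ k * t * (2 : ℝ) ^ (C * d / t ^ 2) *
              Real.log s.card ^ 2 * mstWeight ↥s ∧
          (edgeCount H : ℝ) ≤
            C * (1 / ε) ^ k * (s.card : ℝ) * (2 : ℝ) ^ (C * d / t ^ 2) *
              Real.log s.card * Real.log t := by
  obtain ⟨C, hC, h⟩ := euclidean_low_dim_light_spanner_general
  exact ⟨C, 0, hC, fun d s ε t _ _ _ ht _ => by
    simpa using h (EuclideanSpace ℝ (Fin d)) s t ht⟩
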